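/- Let Φ be a Young function, let μ be a σ-finite measure on a measurable space Ω, and let F : Ω × ℝ → ℝ be a measurable function. Then ‖ ∫_ℝ F(·, t) dt ‖_{L_μ^Φ} ≤ 2 · ∫_ℝ ‖ F(·, t) ‖_{L_μ^Φ} dt, where the gauge norm is taken in the variable on Ω (generalized Minkowski inequality for the gauge norm). -/

import Mathlib

open MeasureTheory Set Filter
open scoped ENNReal NNReal

noncomputable section

/-- A Young function: even, convex, vanishing at `0`, nonnegative, tending to `∞`. -/
def IsYoung (Φ : ℝ → ℝ) : Prop :=
  ConvexOn ℝ Set.univ Φ ∧ (∀ t, Φ (-t) = Φ t) ∧ Φ 0 = 0 ∧ (∀ t, 0 ≤ Φ t) ∧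
    Filter.Tendsto Φ Filter.atTop Filter.atTop

/-- A weight on `[a,b]`: nonnegative, measurable, positive a.e. on `[a,b]`. -/
def IsWeight (w : ℝ → ℝ) (a b : ℝ) : Prop :=
  Measurable w ∧ (∀ x, 0 ≤ w x) ∧
    ∀ᵐ x ∂(MeasureTheory.volume.restrict (Set.Icc a b)), 0 < w x

/-- `Φ` is submultiplicative on `[0,∞)`. -/
def Submult (Φ : ℝ → ℝ) : Prop :=
  ∀ s t : ℝ, 0 ≤ s → 0 ≤ t → Φ (s * t) ≤ Φ s * Φ t

/-- `Φinv` is the inverse of `Φ` restricted to `[0,∞)`. -/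
def IsYoungInv (Φ Φinv : ℝ → ℝ) : Prop :=
  (∀ t, 0 ≤ t → 0 ≤ Φinv t) ∧ (∀ t, 0 ≤ t → Φ (Φinv t) = t) ∧
    (∀ t, 0 ≤ t → Φinv (Φ t) = t)

/-- `μ[x,y] := ∫ₓ^y μ(t) dt`, as an extended nonnegative real. -/
def wInt (μ : ℝ → ℝ) (x y : ℝ) : ℝ≥0∞ :=
  ∫⁻ t in Set.Icc x y, ENNReal.ofReal (μ t)

/-- The Luxemburg (gauge) norm of `f` on `[a,b]` w.r.t. the Young function `Φ`
and the weight `μ`: `inf {k > 0 : ∫ₐ^b Φ(f/k) μ ≤ 1}` (`∞` if no such `k`). -/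
def luxNorm (Φ μ : ℝ → ℝ) (a b : ℝ) (f : ℝ → ℝ) : ℝ≥0∞ :=
  sInf {k : ℝ≥0∞ | ∃ c : ℝ, 0 < c ∧ k = ENNReal.ofReal c ∧
    (∫⁻ x in Set.Icc a b, ENNReal.ofReal (Φ (f x / c) * μ x)) ≤ 1}

/-- `f` is Lipschitz on `[a,b]` and `f'` is a.e. its derivative on `(a,b)`. -/
def LipschitzWithDeriv (f f' : ℝ → ℝ) (a b : ℝ) : Prop :=
  (∃ K, LipschitzOnWith K f (Set.Icc a b)) ∧
    ∀ᵐ x ∂(MeasureTheory.volume.restrict (Set.Ioo a b)), HasDerivAt f (f' x) x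

/-- The weighted `L^p` norm `(∫ₐ^b |g|^p w)^{1/p}`, as an extended nonnegative real. -/
def lpNorm (w : ℝ → ℝ) (p a b : ℝ) (g : ℝ → ℝ) : ℝ≥0∞ :=
  (∫⁻ t in Set.Icc a b, ENNReal.ofReal (|g t| ^ p * w t)) ^ (1 / p)

/-- The Luxemburg (gauge) norm on a general measure space. -/
def luxNormGen {Ω : Type*} [MeasurableSpace Ω] (Φ : ℝ → ℝ) (μ : Measure Ω)
    (f : Ω → ℝ) : ℝ≥0∞ :=
  sInf {k : ℝ≥0∞ | ∃ c : ℝ, 0 < c ∧ k = ENNReal.ofReal c ∧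
    (∫⁻ x, ENNReal.ofReal (Φ (f x / c)) ∂μ) ≤ 1}

/-- The Luxemburg (gauge) norm for an extended-real-valued Young function. -/
def luxNormE {Ω : Type*} [MeasurableSpace Ω] (Ψ : ℝ → ℝ≥0∞) (μ : Measure Ω)
    (f : Ω → ℝ) : ℝ≥0∞ :=
  sInf {k : ℝ≥0∞ | ∃ c : ℝ, 0 < c ∧ k = ENNReal.ofReal c ∧
    (∫⁻ x, Ψ (f x / c) ∂μ) ≤ 1}


lemma young_cont {Φ : ℝ → ℝ} (h : IsYoung Φ) : Continuous Φ := by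
  have := h.1.continuousOn isOpen_univ
  exact continuousOn_univ.mp this

lemma young_scale {Φ : ℝ → ℝ} (h : IsYoung Φ) (x c k : ℝ) (hc : 0 < c) (hck : c ≤ k) :
    Φ (x / k) ≤ Φ (x / c) := by
  have hk : 0 < k := hc.trans_le hck
  have hle : c / k ≤ 1 := (div_le_one hk).2 hck
  have h0 : 0 ≤ c / k := by positivity
  have := h.1.2 (mem_univ (x / c)) (mem_univ 0) h0 (sub_nonneg.2 hle) (by ring)
  simp only [smul_eq_mul, mul_zero, add_zero, h.2.2.1] at this
  have e : c / k * (x / c) = x / k := by field_simp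
  rw [e] at this
  exact this.trans (mul_le_of_le_one_left (h.2.2.2.1 _) hle)

lemma modular_le {Ω : Type*} [MeasurableSpace Ω] {Φ : ℝ → ℝ} (h : IsYoung Φ) (μ : Measure Ω)
    (f : Ω → ℝ) (k : ℝ) (hk : luxNormGen Φ μ f < ENNReal.ofReal k) :
    (∫⁻ x, ENNReal.ofReal (Φ (f x / k)) ∂μ) ≤ 1 := by
  obtain ⟨_, ⟨c, hc, rfl, hc1⟩, hlt⟩ := sInf_lt_iff.1 hk
  have hck : c ≤ k := by
    by_contra hh
    exact absurd hlt (not_lt.2 (ENNReal.ofReal_le_ofReal (not_le.1 hh).le))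
  exact (lintegral_mono fun x => ENNReal.ofReal_le_ofReal (young_scale h _ c k hc hck)).trans hc1

lemma luxNormGen_eq {Ω : Type*} [MeasurableSpace Ω] {Φ : ℝ → ℝ} (h : IsYoung Φ) (μ : Measure Ω)
    (f : Ω → ℝ) : luxNormGen Φ μ f = ⨅ q : {q : ℚ // 0 < q},
      (Set.Iic (1 : ℝ≥0∞)).piecewise (fun _ => ENNReal.ofReal (q.1 : ℝ)) (fun _ => ∞)
        (∫⁻ x, ENNReal.ofReal (Φ (f x / (q.1 : ℝ))) ∂μ) := by
  apply le_antisymm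
  · refine le_iInf fun q => ?_
    by_cases hq : (∫⁻ x, ENNReal.ofReal (Φ (f x / (q.1 : ℝ))) ∂μ) ≤ 1
    · rw [Set.piecewise_eq_of_mem _ _ _ (Set.mem_Iic.2 hq)]
      exact sInf_le ⟨q.1, by exact_mod_cast q.2, rfl, hq⟩
    · rw [Set.piecewise_eq_of_notMem _ _ _ (mt Set.mem_Iic.1 hq)]; exact le_top
  · refine le_of_forall_gt fun r hr => ?_
    obtain ⟨s, hs0, hs1, hs2⟩ := ENNReal.lt_iff_exists_rat_btwn.1 hr
    have hs1' : luxNormGen Φ μ f < ENNReal.ofReal (s : ℝ) := hs1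
    have hpos : 0 < s := by
      have := ENNReal.ofReal_pos.1 (lt_of_le_of_lt zero_le hs1')
      exact_mod_cast this
    have hm := modular_le h μ f s hs1'
    refine lt_of_le_of_lt (iInf_le _ ⟨s, hpos⟩) ?_
    rw [Set.piecewise_eq_of_mem _ _ _ (Set.mem_Iic.2 hm)]
    exact hs2

lemma jensen_lint {Φ : ℝ → ℝ} (h : IsYoung Φ) {α : Type*} [MeasurableSpace α] (ν : Measure α)
    [IsProbabilityMeasure ν] (f : α → ℝ) (hf : Integrable f ν) :
    ENNReal.ofReal (Φ (∫ t, f t ∂ν)) ≤ ∫⁻ t, ENNReal.ofReal (Φ (f t)) ∂ν := by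
  have hm : AEStronglyMeasurable (fun t => Φ (f t)) ν :=
    (young_cont h).comp_aestronglyMeasurable hf.1
  by_cases hi : Integrable (fun t => Φ (f t)) ν
  · have := h.1.map_integral_le (μ := ν) (f := f) (young_cont h).continuousOn isClosed_univ
      (by simp) hf hi
    rw [← ofReal_integral_eq_lintegral_ofReal hi (ae_of_all _ fun t => h.2.2.2.1 _)]
    exact ENNReal.ofReal_le_ofReal this
  · have : ∫⁻ t, ENNReal.ofReal (Φ (f t)) ∂ν = ∞ := by
      by_contra hne
      exact hi ((lintegral_ofReal_ne_top_iff_integrable hm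
        (ae_of_all _ fun t => h.2.2.2.1 _)).1 hne)
    rw [this]; exact le_top

lemma meas_lux {Ω : Type*} [MeasurableSpace Ω] {Φ : ℝ → ℝ} (hΦ : IsYoung Φ)
    (μ : Measure Ω) [SigmaFinite μ] (F : Ω × ℝ → ℝ) (hF : Measurable F) :
    Measurable fun t => luxNormGen Φ μ (fun ω => F (ω, t)) := by
  simp_rw [luxNormGen_eq hΦ]
  refine Measurable.iInf fun q => ?_
  refine (Measurable.piecewise (measurableSet_Iic) measurable_const measurable_const).comp ?_
  refine Measurable.lintegral_prod_left' (f := fun z : Ω × ℝ =>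
    ENNReal.ofReal (Φ (F z / (q.1 : ℝ)))) ?_
  exact ((young_cont hΦ).measurable.comp (hF.div_const _)).ennreal_ofReal

/-- Generalized Minkowski integral inequality for the gauge norm. -/
theorem gauge_norm_minkowski
    {Ω : Type*} [MeasurableSpace Ω] (Φ : ℝ → ℝ) (hΦ : IsYoung Φ)
    (μ : Measure Ω) [SigmaFinite μ] (F : Ω × ℝ → ℝ) (hF : Measurable F) :
    luxNormGen Φ μ (fun ω => ∫ t : ℝ, F (ω, t))
      ≤ 2 * ∫⁻ t : ℝ, luxNormGen Φ μ (fun ω => F (ω, t)) := by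
  set N : ℝ → ℝ≥0∞ := fun t => luxNormGen Φ μ (fun ω => F (ω, t)) with hN
  have hNm : Measurable N := meas_lux hΦ μ F hF
  suffices hs : luxNormGen Φ μ (fun ω => ∫ t : ℝ, F (ω, t)) ≤ ∫⁻ t, N t from
    hs.trans (le_mul_of_one_le_left zero_le one_le_two)
  refine ENNReal.le_of_forall_pos_le_add fun ε hε hI => ?_
  obtain ⟨g, hg0, hgm, hgI⟩ := exists_pos_lintegral_lt_of_sigmaFinite (volume : Measure ℝ)
    (ε := (ε : ℝ≥0∞)) (by exact_mod_cast hε.ne')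
  set p : ℝ → ℝ≥0 := fun t => (N t).toNNReal + g t with hp
  have hpm : Measurable p := hNm.ennreal_toNNReal.add hgm
  have hp0 : ∀ t, 0 < p t := fun t => add_pos_of_nonneg_of_pos zero_le (hg0 t)
  have hfin : ∀ᵐ t : ℝ, N t < ∞ := ae_lt_top hNm hI.ne
  have hpI : ∫⁻ t, (p t : ℝ≥0∞) ≤ (∫⁻ t, N t) + ε := by
    have : ∀ t, (p t : ℝ≥0∞) ≤ N t + g t := fun t => by
      simp only [hp, ENNReal.coe_add]
      gcongr
      exact ENNReal.coe_toNNReal_le_self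
    refine (lintegral_mono this).trans ?_
    rw [lintegral_add_left hNm]
    gcongr
  have hpfin : ∫⁻ t, (p t : ℝ≥0∞) ≠ ∞ :=
    (hpI.trans_lt (ENNReal.add_lt_top.2 ⟨hI, ENNReal.coe_lt_top⟩)).ne
  have hmod : ∀ᵐ t : ℝ, (∫⁻ ω, ENNReal.ofReal (Φ (F (ω, t) / (p t : ℝ))) ∂μ) ≤ 1 := by
    filter_upwards [hfin] with t ht
    refine modular_le hΦ μ _ _ ?_
    change N t < _
    rw [ENNReal.ofReal_coe_nnreal]
    simp only [hp, ENNReal.coe_add, ENNReal.coe_toNNReal ht.ne]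
    exact ENNReal.lt_add_right ht.ne (by exact_mod_cast (hg0 t).ne')
  refine le_trans ?_ hpI
  obtain ⟨C, hC⟩ : ∃ C : ℝ≥0, (C : ℝ≥0∞) = ∫⁻ t, (p t : ℝ≥0∞) :=
    ⟨_, ENNReal.coe_toNNReal hpfin⟩
  have hC0 : 0 < C := by
    rw [pos_iff_ne_zero]
    rintro rfl
    have h0 := (lintegral_eq_zero_iff hpm.coe_nnreal_ennreal).1 hC.symm
    have : ∀ᵐ t : ℝ, False := by
      filter_upwards [h0] with t ht
      exact (hp0 t).ne' (by simpa using ht)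
    exact this.exists.elim fun _ h => h
  have hC0' : (0 : ℝ) < C := hC0
  rw [← hC]
  set w : ℝ → ℝ≥0 := fun t => p t / C with hw
  have hwm : Measurable w := hpm.div_const _
  have hw0 : ∀ t, 0 < w t := fun t => div_pos (hp0 t) hC0
  have hwI : ∫⁻ t, (w t : ℝ≥0∞) = 1 := by
    simp only [hw, div_eq_mul_inv, ENNReal.coe_mul, ENNReal.coe_inv hC0.ne']
    rw [lintegral_mul_const _ hpm.coe_nnreal_ennreal, ← hC]
    exact ENNReal.mul_inv_cancel (by exact_mod_cast hC0.ne') ENNReal.coe_ne_top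
  set ν : Measure ℝ := volume.withDensity (fun t => (w t : ℝ≥0∞)) with hν
  haveI : IsProbabilityMeasure ν := ⟨by rw [hν, withDensity_apply _ MeasurableSet.univ]; simpa using hwI⟩
  have hG : Measurable fun z : Ω × ℝ => ENNReal.ofReal (Φ (F z / (p z.2 : ℝ))) :=
    ((young_cont hΦ).measurable.comp
      (hF.div (hpm.comp measurable_snd).coe_nnreal_real)).ennreal_ofReal
  have key : ∀ ω, ENNReal.ofReal (Φ ((∫ t : ℝ, F (ω, t)) / C)) ≤
      ∫⁻ t, ENNReal.ofReal (Φ (F (ω, t) / (p t : ℝ))) ∂ν := by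
    intro ω
    have hsm : ∀ t, w t • (F (ω, t) / (p t : ℝ)) = F (ω, t) / C := fun t => by
      have : (p t : ℝ) ≠ 0 := by exact_mod_cast (hp0 t).ne'
      simp only [hw, NNReal.smul_def, smul_eq_mul, NNReal.coe_div]
      field_simp
    by_cases hi : Integrable (fun t => F (ω, t))
    · have hi' : Integrable (fun t => F (ω, t) / (p t : ℝ)) ν := by
        rw [hν, integrable_withDensity_iff_integrable_smul hwm]
        simp_rw [hsm]
        exact hi.div_const _
      have hj := jensen_lint hΦ ν _ hi'
      have e : ∫ t, F (ω, t) / (p t : ℝ) ∂ν = (∫ t : ℝ, F (ω, t)) / C := by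
        rw [hν, integral_withDensity_eq_integral_smul hwm]
        simp_rw [hsm]
        exact integral_div _ _
      rwa [e] at hj
    · rw [integral_undef hi]
      simp [hΦ.2.2.1]
  refine sInf_le ⟨C, hC0', by simp, ?_⟩
  calc _ ≤ ∫⁻ ω, ∫⁻ t, ENNReal.ofReal (Φ (F (ω, t) / (p t : ℝ))) ∂ν ∂μ := lintegral_mono key
    _ = ∫⁻ t, ∫⁻ ω, ENNReal.ofReal (Φ (F (ω, t) / (p t : ℝ))) ∂μ ∂ν :=
        lintegral_lintegral_swap hG.aemeasurable
    _ ≤ ∫⁻ t, 1 ∂ν := lintegral_mono_ae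
        ((withDensity_absolutelyContinuous volume _).ae_le hmod)
    _ = 1 := by simp
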